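/- Let K be a finite field with q elements, let v_1,…,v_s ∈ {0,1}^n be the characteristic vectors of the edges of a clutter, and let X be the algebraic toric set parameterized by y^{v_1},…,y^{v_s}. Then H_X(d) = |X| for every d ≥ (q−2)(s−1); that is, the index of regularity of S/I(X) is at most (q−2)(s−1). Moreover, if the vanishing ideal I(X) is a complete intersection and q ≥ 3, s ≥ 2, then H_X(d) < |X| for every d with 0 ≤ d < (q−2)(s−1), so the index of regularity equals (q−2)(s−1). -/

import Mathlib

open MvPolynomial

/-- The algebraic toric set `X ⊆ ℙ^(s-1)` parameterized by the monomials
`y^{v_1},…,y^{v_s}`: the classes `[(x^{v_1},…,x^{v_s})]` for `x ∈ (K*)^n`. -/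
def toricSet (K : Type) [Field K] {n s : ℕ} (hs : 1 ≤ s)
    (v : Fin s → Fin n → ℕ) : Set (Projectivization K (Fin s → K)) :=
  {p | ∃ x : Fin n → K, ∃ hx : ∀ t, x t ≠ 0,
    p = Projectivization.mk K (fun j => ∏ t, x t ^ v j t)
      (by
        intro h0
        have h1 := congrFun h0 ⟨0, hs⟩
        simp only [Pi.zero_apply] at h1
        exact Finset.prod_ne_zero_iff.mpr (fun t _ => pow_ne_zero _ (hx t)) h1)}

/-- The Hilbert function of a set `Y` of points of projective space (equivalently the
dimension of the parameterized code of order `d` on `Y`): the `K`-dimension of the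
space of functions on `Y` of the form `[P] ↦ F(P)/P_{i0}^d` with `F` homogeneous of
degree `d`. -/
noncomputable def hilbFn (K : Type) [Field K] {ι : Type}
    (Y : Set (Projectivization K (ι → K))) (i0 : ι) (d : ℕ) : ℕ :=
  Module.finrank K ↥(Submodule.span K
    {f : ↥Y → K | ∃ F : MvPolynomial ι K, F.IsHomogeneous d ∧
      ∀ p : ↥Y, f p = eval p.1.rep F / (p.1.rep i0) ^ d})

/-- The minimum distance of the parameterized (evaluation) code of order `d` on a set
`Y` of points of projective space: the least number of points of `Y` at which a
homogeneous polynomial of degree `d` not vanishing identically on `Y` is nonzero. -/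
noncomputable def minDist (K : Type) [Field K] {ι : Type}
    (Y : Set (Projectivization K (ι → K))) (d : ℕ) : ℕ :=
  sInf {n | ∃ F : MvPolynomial ι K, F.IsHomogeneous d ∧
    (∃ p ∈ Y, eval p.rep F ≠ 0) ∧
    n = Set.ncard {p ∈ Y | eval p.rep F ≠ 0}}

/-!
Write `T` for the set of points of `ℙ^(s-1)` all of whose coordinates are nonzero, so `X ⊆ T`.
Then `H_X(d) = |X|` says that every point of `X` has a separator of degree `d`: a form nonzero at
that point and zero on the rest of `X`.

A point `a ∈ T` with `a_0 = 1` has the separator `∏_{i ≠ 0} ∏_{c ≠ 0, a_i} (t_i - c t_0)` on `T`, of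
degree `(q-2)(s-1)`. There is none of smaller degree: by the lemma behind Chevalley–Warning, the
values of `F · ∏_{i ≠ 0} t_i · (1 - (t_0 - 1)^(q-1))` sum to zero over `K^s`, while for a separator
`F` of `a` the only nonzero value is the one at `a`.

It remains to see that `X = T` if `I(X)` is generated by forms `g_1, …, g_(s-1)`. No form of
`I(X)` contains a power `t_i^b` with `b < q - 1`: substituting `t_j = y^(v_j)` gives the zero
polynomial in `y`, whose value at `y = v_i` is the coefficient of `t_i^b` by the clutter condition.
Write the binomials `t_i^(q-1) - t_0^(q-1) ∈ I(X)` as combinations of the `g_k`. Comparing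
coefficients of pure powers, the square matrix of constant terms of the multipliers is invertible,
so the `g_k` have degree `q - 1` and are linear combinations of the binomials. Hence they vanish on
`T`, and a separator of a point of `T ∖ X` would lie in `I(X)` without vanishing at that point.
-/

section HomogeneousEvaluation

variable {R σ : Type*} [CommSemiring R]

lemma eval_smul_of_isHomogeneous {F : MvPolynomial σ R} {d : ℕ} (hF : F.IsHomogeneous d) (c : R)
    (x : σ → R) : eval (c • x) F = c ^ d * eval x F := by
  rw [eval_eq, eval_eq, Finset.mul_sum]
  refine Finset.sum_congr rfl fun m hm => ?_
  have hdeg : ∑ i ∈ m.support, m i = d := (hF.degree_eq_sum_deg_support hm).symm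
  simp only [Pi.smul_apply, smul_eq_mul, mul_pow, Finset.prod_mul_distrib,
    Finset.prod_pow_eq_pow_sum, hdeg]
  ring

lemma eval_piSingle_one_of_isHomogeneous [DecidableEq σ] {F : MvPolynomial σ R} {d : ℕ}
    (hF : F.IsHomogeneous d) (i : σ) :
    eval (Pi.single i 1) F = coeff (Finsupp.single i d) F := by
  rw [eval_eq, Finset.sum_eq_single (Finsupp.single i d)]
  · rw [Finset.prod_eq_one, mul_one]
    intro j hj
    rw [Finset.mem_singleton.mp (Finsupp.support_single_subset hj), Pi.single_eq_same, one_pow]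
  · intro m hm hne
    obtain ⟨j, hj, hji⟩ : ∃ j ∈ m.support, j ≠ i := by
      by_contra! hsupp
      obtain ⟨b, rfl⟩ := Finsupp.support_subset_singleton'.mp
        fun j hj => Finset.mem_singleton.mpr (hsupp j hj)
      have hdeg : Finsupp.degree (Finsupp.single i b) = d :=
        (hF.degree_eq_sum_deg_support hm).symm
      exact hne (by rw [← hdeg, Finsupp.degree_single])
    rw [Finset.prod_eq_zero hj, mul_zero]
    rw [Pi.single_eq_of_ne hji, zero_pow (Finsupp.mem_support_iff.mp hj)]
  · intro hi
    rw [notMem_support_iff.mp hi, zero_mul]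

end HomogeneousEvaluation

section Separators

variable {K : Type} [Field K] {ι : Type}

lemma eval_rep_mk_eq_zero_iff {F : MvPolynomial ι K} {d : ℕ} (hF : F.IsHomogeneous d)
    (y : ι → K) (hy : y ≠ 0) : eval (Projectivization.mk K y hy).rep F = 0 ↔ eval y F = 0 := by
  obtain ⟨a, ha⟩ := Projectivization.exists_smul_eq_mk_rep K y hy
  rw [← ha, Units.smul_def, eval_smul_of_isHomogeneous hF, mul_eq_zero,
    or_iff_right (pow_ne_zero _ a.ne_zero)]

/-- `F` is a separator of `p` on the set `Y` of projective points: it is nonzero at `p` and zero at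
all other points of `Y`. The values are taken at the chosen representatives, which is immaterial
for homogeneous `F`. -/
def IsSeparator (Y : Set (Projectivization K (ι → K))) (p : Projectivization K (ι → K))
    (F : MvPolynomial ι K) : Prop :=
  eval p.rep F ≠ 0 ∧ ∀ p' ∈ Y, p' ≠ p → eval p'.rep F = 0

/-- The evaluation code of order `d` on `Y`: the space of functions `[P] ↦ F(P) / P_{i₀} ^ d` with
`F` homogeneous of degree `d`, whose dimension is `hilbFn K Y i₀ d`. -/
noncomputable def evalCode (Y : Set (Projectivization K (ι → K))) (i₀ : ι) (d : ℕ) :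
    Submodule K (Y → K) :=
  (homogeneousSubmodule ι K d).map
    (LinearMap.pi fun p : Y => (p.1.rep i₀ ^ d)⁻¹ • (aeval p.1.rep).toLinearMap)

variable {Y : Set (Projectivization K (ι → K))} {i₀ : ι} {d : ℕ}

lemma mem_evalCode {f : Y → K} :
    f ∈ evalCode Y i₀ d ↔ ∃ F : MvPolynomial ι K, F.IsHomogeneous d ∧
      ∀ p : Y, f p = eval p.1.rep F / p.1.rep i₀ ^ d := by
  simp only [evalCode, Submodule.mem_map, mem_homogeneousSubmodule, funext_iff,
    LinearMap.pi_apply, LinearMap.smul_apply, AlgHom.toLinearMap_apply, aeval_eq_eval,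
    smul_eq_mul, div_eq_inv_mul, eq_comm]

lemma hilbFn_eq_finrank_evalCode : hilbFn K Y i₀ d = Module.finrank K (evalCode Y i₀ d) := by
  have hset : {f : Y → K | ∃ F : MvPolynomial ι K, F.IsHomogeneous d ∧
      ∀ p : Y, f p = eval p.1.rep F / p.1.rep i₀ ^ d} = evalCode Y i₀ d :=
    Set.ext fun _ => mem_evalCode.symm
  rw [hilbFn, hset, Submodule.span_eq]

lemma finrank_fun_eq_ncard [Finite Y] : Module.finrank K (Y → K) = Y.ncard := by
  have := Fintype.ofFinite Y
  rw [Module.finrank_fintype_fun_eq_card, ← Nat.card_eq_fintype_card, Nat.card_coe_set_eq]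

lemma hilbFn_le_ncard [Finite Y] : hilbFn K Y i₀ d ≤ Y.ncard := by
  rw [hilbFn_eq_finrank_evalCode, ← finrank_fun_eq_ncard (K := K)]
  exact Submodule.finrank_le _

lemma hilbFn_eq_ncard_iff_evalCode_eq_top [Finite Y] :
    hilbFn K Y i₀ d = Y.ncard ↔ evalCode Y i₀ d = ⊤ := by
  rw [hilbFn_eq_finrank_evalCode, ← finrank_fun_eq_ncard (K := K)]
  exact ⟨Submodule.eq_top_of_finrank_eq, fun h => by rw [h, finrank_top]⟩

lemma piSingle_mem_evalCode_iff [DecidableEq Y] (hY : ∀ p ∈ Y, p.rep i₀ ≠ 0) (p : Y) :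
    Pi.single p 1 ∈ evalCode Y i₀ d ↔
      ∃ F : MvPolynomial ι K, F.IsHomogeneous d ∧ IsSeparator Y p F := by
  have hden (p' : Y) : p'.1.rep i₀ ^ d ≠ 0 := pow_ne_zero _ (hY p'.1 p'.2)
  rw [mem_evalCode]
  constructor
  · rintro ⟨F, hF, hval⟩
    refine ⟨F, hF, fun h0 => ?_, fun p' hp' hne => ?_⟩
    · simpa [h0] using hval p
    · have h0 := hval ⟨p', hp'⟩
      rw [Pi.single_eq_of_ne (by simpa [Subtype.ext_iff] using hne)] at h0
      exact (div_eq_zero_iff.mp h0.symm).resolve_right (hden ⟨p', hp'⟩)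
  · rintro ⟨F, hF, hp, hne⟩
    refine ⟨C (p.1.rep i₀ ^ d / eval p.1.rep F) * F, hF.C_mul _, fun p' => ?_⟩
    obtain rfl | hpp := eq_or_ne p' p
    · have hp' := hden p'
      simp only [Pi.single_eq_same, map_mul, eval_C]
      field_simp
    · simp [Pi.single_eq_of_ne hpp, hne p' p'.2 (Subtype.coe_injective.ne hpp)]

lemma hilbFn_eq_ncard_iff_exists_isSeparator [Finite Y] (hY : ∀ p ∈ Y, p.rep i₀ ≠ 0) :
    hilbFn K Y i₀ d = Y.ncard ↔
      ∀ p ∈ Y, ∃ F : MvPolynomial ι K, F.IsHomogeneous d ∧ IsSeparator Y p F := by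
  classical
  have := Fintype.ofFinite Y
  rw [hilbFn_eq_ncard_iff_evalCode_eq_top]
  constructor
  · intro htop p hp
    exact (piSingle_mem_evalCode_iff hY ⟨p, hp⟩).mp (htop ▸ Submodule.mem_top)
  · intro hsep
    refine eq_top_iff.mpr fun f _ => ?_
    rw [pi_eq_sum_univ' f]
    refine Submodule.sum_mem _ fun p _ => Submodule.smul_mem _ _ ?_
    convert (piSingle_mem_evalCode_iff hY p).mpr (hsep p p.2) using 1

end Separators

section ProjTorus

variable {K : Type} [Field K] {ι : Type}

/-- The projective torus: the points of projective space all of whose coordinates are nonzero. -/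
def projTorus (K : Type) [Field K] (ι : Type) : Set (Projectivization K (ι → K)) :=
  {p | ∀ i, p.rep i ≠ 0}

lemma mk_mem_projTorus_iff (y : ι → K) (hy : y ≠ 0) :
    Projectivization.mk K y hy ∈ projTorus K ι ↔ ∀ i, y i ≠ 0 := by
  obtain ⟨a, ha⟩ := Projectivization.exists_smul_eq_mk_rep K y hy
  simp [projTorus, ← ha, Units.smul_def]

lemma eq_of_rep_div_eq {p p' : Projectivization K (ι → K)} {i₀ : ι} (hp : p.rep i₀ ≠ 0)
    (hp' : p'.rep i₀ ≠ 0) (h : ∀ i, p.rep i / p.rep i₀ = p'.rep i / p'.rep i₀) : p = p' := by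
  rw [← p.mk_rep, ← p'.mk_rep, Projectivization.mk_eq_mk_iff']
  refine ⟨p.rep i₀ / p'.rep i₀, funext fun i => ?_⟩
  have hi := h i
  rw [Pi.smul_apply, smul_eq_mul]
  field_simp at hi ⊢
  exact hi.symm

lemma projTorus_nonempty (i₀ : ι) : (projTorus K ι).Nonempty :=
  have hone : (1 : ι → K) ≠ 0 := fun h => one_ne_zero (congrFun h i₀)
  ⟨Projectivization.mk K 1 hone, (mk_mem_projTorus_iff 1 hone).mpr fun _ => one_ne_zero⟩

variable [Fintype K]

lemma eval_one_sub_X_sub_one_pow [DecidableEq K] (i : ι) (x : ι → K) :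
    eval x (1 - (X i - 1) ^ (Fintype.card K - 1) : MvPolynomial ι K) =
      if x i = 1 then 1 else 0 := by
  have hK : Fintype.card K - 1 ≠ 0 := Nat.sub_ne_zero_of_lt Fintype.one_lt_card
  simp only [map_sub, map_one, map_pow, eval_X]
  split_ifs with hx
  · rw [hx, sub_self, zero_pow hK, sub_zero]
  · rw [FiniteField.pow_card_sub_one_eq_one _ (sub_ne_zero.mpr hx), sub_self]

variable [Fintype ι]

open Classical in
/-- The form `∏_{i ≠ i₀} ∏_{c ≠ 0, a_i} (t_i - c t_{i₀})`. On the projective torus it vanishes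
exactly at the points whose ratios `t_i / t_{i₀}` are not all equal to `a_i`. -/
noncomputable def torusSeparator (i₀ : ι) (a : ι → K) : MvPolynomial ι K :=
  ∏ i ∈ Finset.univ.erase i₀, ∏ c ∈ {0, a i}ᶜ, (X i - C c * X i₀)

lemma isHomogeneous_torusSeparator (i₀ : ι) {a : ι → K} (ha : ∀ i, a i ≠ 0) :
    (torusSeparator i₀ a).IsHomogeneous ((Fintype.card K - 2) * (Fintype.card ι - 1)) := by
  classical
  have hinner (i : ι) : (∏ c ∈ ({0, a i}ᶜ : Finset K),
      (X i - C c * X i₀ : MvPolynomial ι K)).IsHomogeneous (Fintype.card K - 2) := by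
    have hcard : ∑ _c ∈ ({0, a i}ᶜ : Finset K), 1 = Fintype.card K - 2 := by
      rw [Finset.sum_const, smul_eq_mul, mul_one, Finset.card_compl,
        Finset.card_pair (ha i).symm]
    rw [← hcard]
    exact IsHomogeneous.prod _ _ _ fun c _ =>
      (isHomogeneous_X K i).sub (isHomogeneous_C_mul_X c i₀)
  have hcard : ∑ _i ∈ Finset.univ.erase i₀, (Fintype.card K - 2) =
      (Fintype.card K - 2) * (Fintype.card ι - 1) := by
    rw [Finset.sum_const, Finset.card_erase_of_mem (Finset.mem_univ _), Finset.card_univ,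
      smul_eq_mul, mul_comm]
  rw [← hcard]
  exact IsHomogeneous.prod _ _ _ fun i _ => hinner i

lemma eval_torusSeparator_ne_zero_iff {i₀ : ι} {a y : ι → K} (hy : ∀ i, y i ≠ 0) :
    eval y (torusSeparator i₀ a) ≠ 0 ↔ ∀ i ≠ i₀, y i / y i₀ = a i := by
  classical
  have hfactor (i : ι) (c : K) : y i - c * y i₀ ≠ 0 ↔ c ≠ y i / y i₀ := by
    rw [Ne, sub_eq_zero, Ne, eq_div_iff (hy i₀), eq_comm]
  have hratio (i : ι) : y i / y i₀ ≠ 0 := div_ne_zero (hy i) (hy i₀)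
  simp only [torusSeparator, map_prod, Finset.prod_ne_zero_iff, map_sub, map_mul, eval_X, eval_C,
    hfactor, Finset.mem_erase, Finset.mem_univ, and_true, Finset.mem_compl, Finset.mem_insert,
    Finset.mem_singleton]
  refine forall₂_congr fun i _ => ⟨fun h => ?_, fun h c hc hcy => hc (Or.inr (hcy.trans h))⟩
  by_contra hne
  exact h (y i / y i₀) (not_or.mpr ⟨hratio i, hne⟩) rfl

lemma exists_isSeparator_projTorus (i₀ : ι) {p : Projectivization K (ι → K)}
    (hp : p ∈ projTorus K ι) :
    ∃ F : MvPolynomial ι K,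
      F.IsHomogeneous ((Fintype.card K - 2) * (Fintype.card ι - 1)) ∧
        IsSeparator (projTorus K ι) p F := by
  refine ⟨torusSeparator i₀ fun i => p.rep i / p.rep i₀,
    isHomogeneous_torusSeparator i₀ fun i => div_ne_zero (hp i) (hp i₀),
    (eval_torusSeparator_ne_zero_iff hp).mpr fun _ _ => rfl, fun p' hp' hne => ?_⟩
  by_contra hev
  have hratio := (eval_torusSeparator_ne_zero_iff hp').mp hev
  refine hne (eq_of_rep_div_eq (hp' i₀) (hp i₀) fun i => ?_)
  obtain rfl | hi := eq_or_ne i i₀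
  · rw [div_self (hp' i), div_self (hp i)]
  · exact hratio i hi

theorem hilbFn_eq_ncard_of_subset_projTorus {Y : Set (Projectivization K (ι → K))}
    (hY : Y ⊆ projTorus K ι) (i₀ : ι) {d : ℕ}
    (hd : (Fintype.card K - 2) * (Fintype.card ι - 1) ≤ d) : hilbFn K Y i₀ d = Y.ncard := by
  refine (hilbFn_eq_ncard_iff_exists_isSeparator fun p hp => hY hp i₀).mpr fun p hp => ?_
  obtain ⟨F, hF, hFp, hFne⟩ := exists_isSeparator_projTorus i₀ (hY hp)
  refine ⟨X i₀ ^ (d - (Fintype.card K - 2) * (Fintype.card ι - 1)) * F, ?_, ?_, ?_⟩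
  · have hmul := (isHomogeneous_X_pow (R := K) i₀
      (d - (Fintype.card K - 2) * (Fintype.card ι - 1))).mul hF
    rwa [Nat.sub_add_cancel hd] at hmul
  · simpa using ⟨fun h => absurd h (hY hp i₀), hFp⟩
  · intro p' hp' hne
    rw [map_mul, hFne p' (hY hp') hne, mul_zero]

/-- The polynomial `∏_{i ≠ i₀} t_i · (1 - (t_{i₀} - 1)^(q-1))`: a weight on `K^ι` supported on the
points with `t_{i₀} = 1` and all coordinates nonzero, which represent the projective torus. -/
noncomputable def torusWeight (K : Type) [Field K] [Fintype K] [DecidableEq ι] (i₀ : ι) :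
    MvPolynomial ι K :=
  (∏ i ∈ Finset.univ.erase i₀, X i) * (1 - (X i₀ - 1) ^ (Fintype.card K - 1))

lemma eval_torusWeight_ne_zero_iff [DecidableEq ι] (i₀ : ι) (x : ι → K) :
    eval x (torusWeight K i₀) ≠ 0 ↔ x i₀ = 1 ∧ ∀ i, x i ≠ 0 := by
  classical
  rw [torusWeight, map_mul, eval_one_sub_X_sub_one_pow, mul_ite, mul_one, mul_zero,
    ite_ne_right_iff]
  refine and_congr_right fun hx => ?_
  simp only [map_prod, eval_X, Finset.prod_ne_zero_iff, Finset.mem_erase, Finset.mem_univ,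
    and_true]
  refine ⟨fun h i => ?_, fun h i _ => h i⟩
  obtain rfl | hi := eq_or_ne i i₀
  · exact hx ▸ one_ne_zero
  · exact h i hi

lemma totalDegree_torusWeight_le [DecidableEq ι] (i₀ : ι) :
    (torusWeight K i₀).totalDegree ≤ (Fintype.card ι - 1) + (Fintype.card K - 1) := by
  have hprod : (∏ i ∈ Finset.univ.erase i₀, X i : MvPolynomial ι K).totalDegree ≤
      Fintype.card ι - 1 := by
    refine (totalDegree_finsetProd _ _).trans_eq ?_
    simp only [totalDegree_X, Finset.sum_const, smul_eq_mul, mul_one,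
      Finset.card_erase_of_mem (Finset.mem_univ _), Finset.card_univ]
  have hlin : (X i₀ - 1 : MvPolynomial ι K).totalDegree ≤ 1 := by
    refine (totalDegree_sub _ _).trans ?_
    rw [totalDegree_X, totalDegree_one, max_eq_left zero_le_one]
  have hpow : (1 - (X i₀ - 1) ^ (Fintype.card K - 1) : MvPolynomial ι K).totalDegree ≤
      Fintype.card K - 1 := by
    refine (totalDegree_sub _ _).trans (max_le (by rw [totalDegree_one]; exact Nat.zero_le _) ?_)
    exact (totalDegree_pow _ _).trans (mul_le_of_le_one_right (Nat.zero_le _) hlin)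
  exact (totalDegree_mul _ _).trans (add_le_add hprod hpow)

lemma eval_eq_zero_of_totalDegree_lt {F : MvPolynomial ι K} {i₀ : ι} {a : ι → K}
    (hF : F.totalDegree < (Fintype.card K - 2) * (Fintype.card ι - 1)) (ha₀ : a i₀ = 1)
    (ha : ∀ i, a i ≠ 0) (hzero : ∀ y, y i₀ = 1 → (∀ i, y i ≠ 0) → y ≠ a → eval y F = 0) :
    eval a F = 0 := by
  classical
  have hsum : ∑ x, eval x (F * torusWeight K i₀) = 0 := by
    refine sum_eval_eq_zero _ ?_
    have hdeg := (totalDegree_mul F (torusWeight K i₀)).trans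
      (Nat.add_le_add_left (totalDegree_torusWeight_le i₀) _)
    obtain ⟨m, hm⟩ : ∃ m, Fintype.card ι = m + 1 :=
      Nat.exists_eq_add_one.mpr (Fintype.card_pos_iff.mpr ⟨i₀⟩)
    obtain ⟨k, hk⟩ : ∃ k, Fintype.card K = k + 2 :=
      Nat.exists_eq_add_of_le' Fintype.one_lt_card
    rw [hm, hk] at hF hdeg ⊢
    simp only [Nat.add_sub_cancel, Nat.add_succ_sub_one] at hF hdeg ⊢
    calc (F * torusWeight K i₀).totalDegree ≤ F.totalDegree + (m + (k + 1)) := hdeg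
      _ < k * m + (m + (k + 1)) := Nat.add_lt_add_right hF _
      _ = (k + 1) * (m + 1) := by ring
  rw [Finset.sum_eq_single a, map_mul] at hsum
  · exact (mul_eq_zero.mp hsum).resolve_right
      ((eval_torusWeight_ne_zero_iff i₀ a).mpr ⟨ha₀, ha⟩)
  · intro y _ hya
    rw [map_mul, mul_eq_zero, or_iff_not_imp_right]
    intro hw
    obtain ⟨hy₀, hy⟩ := (eval_torusWeight_ne_zero_iff i₀ y).mp hw
    exact hzero y hy₀ hy hya
  · exact fun h => absurd (Finset.mem_univ a) h

lemma not_isSeparator_projTorus (i₀ : ι) {F : MvPolynomial ι K} {d : ℕ}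
    (hF : F.IsHomogeneous d) (hd : d < (Fintype.card K - 2) * (Fintype.card ι - 1))
    {p : Projectivization K (ι → K)} (hp : p ∈ projTorus K ι) :
    ¬ IsSeparator (projTorus K ι) p F := by
  rintro ⟨hFp, hFne⟩
  have hinv : (p.rep i₀)⁻¹ ≠ 0 := inv_ne_zero (hp i₀)
  have hzero : eval ((p.rep i₀)⁻¹ • p.rep) F = 0 := by
    refine eval_eq_zero_of_totalDegree_lt (hF.totalDegree_le.trans_lt hd)
      (inv_mul_cancel₀ (hp i₀)) (fun i => mul_ne_zero hinv (hp i)) fun y hy₀ hy hya => ?_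
    have hy' : y ≠ 0 := fun h => hy i₀ (congrFun h i₀)
    rw [← eval_rep_mk_eq_zero_iff hF y hy']
    refine hFne _ ((mk_mem_projTorus_iff y hy').mpr hy) fun hmk => hya ?_
    rw [← p.mk_rep, Projectivization.mk_eq_mk_iff'] at hmk
    obtain ⟨c, rfl⟩ := hmk
    rw [← eq_inv_of_mul_eq_one_left hy₀]
  rw [eval_smul_of_isHomogeneous hF, mul_eq_zero] at hzero
  exact hzero.elim (pow_ne_zero _ hinv) hFp

theorem hilbFn_projTorus_lt_ncard (i₀ : ι) {d : ℕ}
    (hd : d < (Fintype.card K - 2) * (Fintype.card ι - 1)) :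
    hilbFn K (projTorus K ι) i₀ d < (projTorus K ι).ncard := by
  refine hilbFn_le_ncard.lt_of_ne fun heq => ?_
  obtain ⟨p, hp⟩ := projTorus_nonempty (K := K) i₀
  obtain ⟨F, hF, hsep⟩ := (hilbFn_eq_ncard_iff_exists_isSeparator (Y := projTorus K ι)
    fun _ h => h i₀).mp heq p hp
  exact not_isSeparator_projTorus i₀ hF hd hp hsep

end ProjTorus

section Binomials

variable {R σ : Type*} [CommRing R]

/-- The binomial `t_i ^ r - t_{i₀} ^ r`. For `r = q - 1` and `i ≠ i₀` these generate the vanishing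
ideal of the projective torus over a field with `q` elements. -/
noncomputable def powBinomial (R : Type*) [CommRing R] {σ : Type*} (r : ℕ) (i₀ i : σ) :
    MvPolynomial σ R :=
  X i ^ r - X i₀ ^ r

lemma isHomogeneous_powBinomial (r : ℕ) (i₀ i : σ) :
    (powBinomial R r i₀ i).IsHomogeneous r :=
  (isHomogeneous_X_pow _ _).sub (isHomogeneous_X_pow _ _)

lemma eval_powBinomial_card_sub_one {K : Type*} [Field K] [Fintype K] (i₀ i : σ) {y : σ → K}
    (hy : ∀ j, y j ≠ 0) : eval y (powBinomial K (Fintype.card K - 1) i₀ i) = 0 := by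
  simp [powBinomial, FiniteField.pow_card_sub_one_eq_one _ (hy _)]

lemma coeff_single_powBinomial [DecidableEq σ] {r : ℕ} (hr : r ≠ 0) {i₀ i j : σ} (hj : j ≠ i₀) :
    coeff (Finsupp.single j r) (powBinomial R r i₀ i) = if i = j then 1 else 0 := by
  simp [powBinomial, coeff_X_pow, Finsupp.single_left_inj hr, hj.symm]

lemma degree_lt_degree_of_lt {b e : σ →₀ ℕ} (hbe : b < e) : b.degree < e.degree := by
  obtain ⟨a, rfl⟩ := exists_add_of_le hbe.le
  have ha : a ≠ 0 := fun h => hbe.ne (by rw [h, add_zero])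
  rw [map_add]
  exact Nat.lt_add_of_pos_right (Nat.pos_of_ne_zero (mt (Finsupp.degree_eq_zero_iff a).mp ha))

lemma coeff_mul_of_forall_lt_coeff_eq_zero {c g : MvPolynomial σ R} {e : σ →₀ ℕ}
    (hg : ∀ b < e, coeff b g = 0) : coeff e (c * g) = coeff 0 c * coeff e g := by
  classical
  rw [coeff_mul, Finset.sum_eq_single (0, e)]
  · rintro ⟨a, b⟩ hab hne
    rw [Finset.HasAntidiagonal.mem_antidiagonal] at hab
    have hbe : b ≠ e := by
      rintro rfl
      exact hne (Prod.ext (add_eq_right.mp hab) rfl)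
    rw [hg b ((hab ▸ le_add_self : b ≤ e).lt_of_ne hbe), mul_zero]
  · exact fun h => absurd (Finset.HasAntidiagonal.mem_antidiagonal.mpr (zero_add e)) h

lemma coeff_eq_zero_of_lt_single {g : MvPolynomial σ R} {r : ℕ} {i : σ}
    (hg : ∀ b < r, coeff (Finsupp.single i b) g = 0) {m : σ →₀ ℕ}
    (hm : m < Finsupp.single i r) : coeff m g = 0 := by
  obtain ⟨b, rfl⟩ := Finsupp.support_subset_singleton'.mp
    ((Finsupp.support_mono hm.le).trans Finsupp.support_single_subset)
  refine hg b (lt_of_le_of_ne ?_ fun h => hm.ne (by rw [h]))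
  simpa using hm.le i

variable {κ : Type*} [Fintype κ] {r : ℕ} {i₀ : σ}
  {g : κ → MvPolynomial σ R} {c : Matrix {i // i ≠ i₀} κ (MvPolynomial σ R)}

lemma constCoeff_mul_coeff_single_eq_one [DecidableEq σ] (hr : r ≠ 0)
    (hpure : ∀ k i, ∀ b < r, coeff (Finsupp.single i b) (g k) = 0)
    (hc : ∀ i, ∑ k, c i k * g k = powBinomial R r i₀ i) :
    c.map (coeff 0) * Matrix.of (fun k (i : {i // i ≠ i₀}) => coeff (Finsupp.single i.1 r) (g k)) =
      1 := by
  ext i j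
  calc ∑ k, coeff 0 (c i k) * coeff (Finsupp.single j.1 r) (g k)
      = ∑ k, coeff (Finsupp.single j.1 r) (c i k * g k) :=
        Finset.sum_congr rfl fun k _ => (coeff_mul_of_forall_lt_coeff_eq_zero fun _ =>
          coeff_eq_zero_of_lt_single (hpure k j)).symm
    _ = coeff (Finsupp.single j.1 r) (powBinomial R r i₀ i) := by rw [← coeff_sum, hc]
    _ = (1 : Matrix _ _ R) i j := by
        simp only [coeff_single_powBinomial hr j.2, Matrix.one_apply, Subtype.ext_iff]

lemma powBinomial_eq_sum_constCoeff_smul (hg : ∀ k, (g k).IsHomogeneous r)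
    (hc : ∀ i, ∑ k, c i k * g k = powBinomial R r i₀ i) (i : {i // i ≠ i₀}) :
    powBinomial R r i₀ i = ∑ k, coeff 0 (c i k) • g k := by
  ext e
  by_cases he : e.degree = r
  · rw [← hc, coeff_sum, coeff_sum]
    refine Finset.sum_congr rfl fun k _ => ?_
    rw [coeff_smul, smul_eq_mul]
    refine coeff_mul_of_forall_lt_coeff_eq_zero fun b hb => (hg k).coeff_eq_zero ?_
    rw [← he]
    exact (degree_lt_degree_of_lt hb).ne
  · rw [(isHomogeneous_powBinomial r i₀ i.1).coeff_eq_zero he,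
      (IsHomogeneous.sum _ _ r fun k _ => smul_eq_C_mul (g k) _ ▸ (hg k).C_mul _).coeff_eq_zero he]

theorem span_range_eq_span_powBinomial [Nontrivial R] [Fintype σ] (hr : r ≠ 0)
    (hcard : Fintype.card κ = Fintype.card σ - 1) (hhom : ∀ k, ∃ e, (g k).IsHomogeneous e)
    (hpure : ∀ k i, ∀ b < r, coeff (Finsupp.single i b) (g k) = 0)
    (hmem : ∀ i, powBinomial R r i₀ i ∈ Ideal.span (Set.range g)) :
    Ideal.span (Set.range g) = Ideal.span (Set.range (powBinomial R r i₀)) := by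
  classical
  refine le_antisymm (Ideal.span_le.mpr ?_) (Ideal.span_le.mpr (Set.range_subset_iff.mpr hmem))
  rintro _ ⟨k, rfl⟩
  choose c hc using fun i : {i // i ≠ i₀} => Ideal.mem_span_range_iff_exists_fun.mp (hmem i)
  set A : Matrix {i // i ≠ i₀} κ R := (Matrix.of c).map (coeff 0)
  set B : Matrix κ {i // i ≠ i₀} R :=
    Matrix.of fun k i => coeff (Finsupp.single i.1 r) (g k)
  have hBA : B * A = 1 :=
    (Matrix.mul_eq_one_comm_of_card_eq _ _ _ ((Set.card_ne_eq i₀).trans hcard.symm)).mp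
      (constCoeff_mul_coeff_single_eq_one hr hpure hc)
  have hdeg (k : κ) : (g k).IsHomogeneous r := by
    obtain ⟨e, he⟩ := hhom k
    obtain ⟨i, hi⟩ : ∃ i, B k i ≠ 0 := by
      by_contra! hrow
      simpa [Matrix.mul_apply, hrow] using congrFun₂ hBA k k
    have hre : (Finsupp.single i.1 r).degree = e := by
      by_contra hne
      exact hi (he.coeff_eq_zero hne)
    rwa [← hre, Finsupp.degree_single] at he
  have hgk : g k = ∑ i, B k i • powBinomial R r i₀ i := by
    simp only [powBinomial_eq_sum_constCoeff_smul hdeg hc, Finset.smul_sum, smul_smul]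
    rw [Finset.sum_comm]
    simp only [← Finset.sum_smul]
    calc g k = ∑ l, (B * A) k l • g l := by simp [hBA, Matrix.one_apply]
      _ = _ := rfl
  rw [hgk]
  exact Ideal.sum_mem _ fun i _ =>
    Submodule.smul_of_tower_mem _ _ (Ideal.subset_span (Set.mem_range_self i.1))

end Binomials

section Clutter

lemma degreeOf_bind₁_le {R σ τ : Type*} [CommSemiring R] (p : σ → MvPolynomial τ R) (t : τ)
    {b : ℕ} (hp : ∀ j, (p j).degreeOf t ≤ b) (F : MvPolynomial σ R) :
    (bind₁ p F).degreeOf t ≤ b * F.totalDegree := by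
  rw [bind₁, aeval_def, eval₂_eq]
  refine (degreeOf_sum_le _ _ _).trans (Finset.sup_le fun m hm => ?_)
  calc (algebraMap R (MvPolynomial τ R) (coeff m F) * ∏ j ∈ m.support, p j ^ m j).degreeOf t
      ≤ (∏ j ∈ m.support, p j ^ m j).degreeOf t := degreeOf_C_mul_le _ _ _
    _ ≤ ∑ j ∈ m.support, (p j ^ m j).degreeOf t := degreeOf_prod_le _ _ _
    _ ≤ ∑ j ∈ m.support, m j * b := Finset.sum_le_sum fun j _ =>
        (degreeOf_pow_le _ _ _).trans (Nat.mul_le_mul_left _ (hp j))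
    _ = b * m.degree := by rw [← Finset.sum_mul, mul_comm, Finsupp.degree_apply]
    _ ≤ b * F.totalDegree := Nat.mul_le_mul_left _ (le_totalDegree hm)

variable {σ τ : Type*} [Fintype τ] {v : σ → τ → ℕ}

lemma degreeOf_prod_X_pow_le {R : Type*} [CommSemiring R] [Nontrivial R] (u : τ → ℕ) (t : τ) :
    (∏ t', X t' ^ u t' : MvPolynomial τ R).degreeOf t ≤ u t := by
  refine (degreeOf_prod_le _ _ _).trans ?_
  rw [Finset.sum_eq_single t, degreeOf_X_self_pow]
  · exact fun t' _ ht' => degreeOf_X_pow_of_ne _ ht'.symm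
  · exact fun h => absurd (Finset.mem_univ t) h

lemma prod_natCast_pow_eq_piSingle_of_clutter {R : Type*} [CommSemiring R] [DecidableEq σ]
    (hv01 : ∀ i t, v i t ≤ 1) (hclutter : ∀ i j, i ≠ j → ¬ ∀ t, v i t ≤ v j t) (i : σ) :
    (fun j => ∏ t, (v i t : R) ^ v j t) = Pi.single i 1 := by
  funext j
  obtain rfl | hji := eq_or_ne j i
  · rw [Pi.single_eq_same]
    refine Finset.prod_eq_one fun t _ => ?_
    obtain h | h := Nat.le_one_iff_eq_zero_or_eq_one.mp (hv01 j t) <;> simp [h]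
  · obtain ⟨t, ht⟩ := not_forall.mp (hclutter j i hji)
    have hit : v i t = 0 := by have := hv01 j t; omega
    rw [Pi.single_eq_of_ne hji]
    exact Finset.prod_eq_zero (Finset.mem_univ t) (by rw [hit, Nat.cast_zero, zero_pow (by omega)])

variable {K : Type*} [Field K] [Fintype K]

lemma eval_eq_zero_of_totalDegree_lt_card_sub_one (hv01 : ∀ i t, v i t ≤ 1)
    {F : MvPolynomial σ K} (hF : F.totalDegree < Fintype.card K - 1)
    (hvan : ∀ x : τ → K, (∀ t, x t ≠ 0) → eval (fun j => ∏ t, x t ^ v j t) F = 0) (x : τ → K) :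
    eval (fun j => ∏ t, x t ^ v j t) F = 0 := by
  classical
  set P : MvPolynomial τ K := bind₁ (fun j => ∏ t, X t ^ v j t) F
  have heval (x : τ → K) : eval x P = eval (fun j => ∏ t, x t ^ v j t) F := by
    simp only [P, ← aeval_eq_eval, aeval_bind₁, map_prod, map_pow, aeval_X]
  have hP : P = 0 := by
    refine eq_zero_of_eval_zero_at_prod_finset P (fun _ => Finset.univ.erase 0) (fun t => ?_)
      fun x hx => (heval x).trans (hvan x fun t => Finset.ne_of_mem_erase (hx t))
    rw [Finset.card_erase_of_mem (Finset.mem_univ _), Finset.card_univ]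
    refine lt_of_le_of_lt ?_ hF
    simpa using degreeOf_bind₁_le _ t (fun j => (degreeOf_prod_X_pow_le _ t).trans (hv01 j t)) F
  rw [← heval, hP, map_zero]

lemma coeff_single_eq_zero_of_clutter (hv01 : ∀ i t, v i t ≤ 1)
    (hclutter : ∀ i j, i ≠ j → ¬ ∀ t, v i t ≤ v j t) {F : MvPolynomial σ K} {e : ℕ}
    (hF : F.IsHomogeneous e)
    (hvan : ∀ x : τ → K, (∀ t, x t ≠ 0) → eval (fun j => ∏ t, x t ^ v j t) F = 0)
    (i : σ) {b : ℕ} (hb : b < Fintype.card K - 1) : coeff (Finsupp.single i b) F = 0 := by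
  classical
  obtain rfl | hbe := eq_or_ne b e
  · rw [← eval_piSingle_one_of_isHomogeneous hF,
      ← prod_natCast_pow_eq_piSingle_of_clutter hv01 hclutter]
    exact eval_eq_zero_of_totalDegree_lt_card_sub_one hv01 (hF.totalDegree_le.trans_lt hb) hvan _
  · exact hF.coeff_eq_zero (by rwa [Finsupp.degree_single])

end Clutter

section ToricSet

variable {K : Type} [Field K] {n s : ℕ}

/-- The vanishing ideal `I(X)` of the toric set parameterized by `y^{v_1}, …, y^{v_s}`: it is
generated by the forms vanishing at all points `(x^{v_1}, …, x^{v_s})` with `x ∈ (K*)^n`. -/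
noncomputable def toricIdeal (K : Type) [Field K] (v : Fin s → Fin n → ℕ) :
    Ideal (MvPolynomial (Fin s) K) :=
  Ideal.span {f | (∃ e, f.IsHomogeneous e) ∧
    ∀ x : Fin n → K, (∀ t, x t ≠ 0) → eval (fun j => ∏ t, x t ^ v j t) f = 0}

variable {v : Fin s → Fin n → ℕ}

lemma prod_pow_ne_zero {x : Fin n → K} (hx : ∀ t, x t ≠ 0) (j : Fin s) : ∏ t, x t ^ v j t ≠ 0 :=
  Finset.prod_ne_zero_iff.mpr fun t _ => pow_ne_zero _ (hx t)

lemma eval_eq_zero_of_mem_toricIdeal {f : MvPolynomial (Fin s) K} (hf : f ∈ toricIdeal K v)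
    {x : Fin n → K} (hx : ∀ t, x t ≠ 0) : eval (fun j => ∏ t, x t ^ v j t) f = 0 := by
  have hle : toricIdeal K v ≤ RingHom.ker (eval fun j => ∏ t, x t ^ v j t) :=
    Ideal.span_le.mpr fun f hf => hf.2 x hx
  exact hle hf

lemma powBinomial_mem_toricIdeal [Fintype K] (i₀ i : Fin s) :
    powBinomial K (Fintype.card K - 1) i₀ i ∈ toricIdeal K v :=
  Ideal.subset_span ⟨⟨_, isHomogeneous_powBinomial _ _ _⟩, fun _ hx =>
    eval_powBinomial_card_sub_one i₀ i (prod_pow_ne_zero hx)⟩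

variable {hs : 1 ≤ s}

lemma toricSet_subset_projTorus : toricSet K hs v ⊆ projTorus K (Fin s) := by
  rintro _ ⟨x, hx, rfl⟩
  exact (mk_mem_projTorus_iff _ _).mpr (prod_pow_ne_zero hx)

lemma mem_toricIdeal_of_forall_mem_toricSet {F : MvPolynomial (Fin s) K} {d : ℕ}
    (hF : F.IsHomogeneous d) (hzero : ∀ p ∈ toricSet K hs v, eval p.rep F = 0) :
    F ∈ toricIdeal K v :=
  Ideal.subset_span ⟨⟨d, hF⟩, fun x hx => (eval_rep_mk_eq_zero_iff hF _ _).mp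
    (hzero _ ⟨x, hx, rfl⟩)⟩

variable [Fintype K]

lemma toricIdeal_eq_span_powBinomial (hK : 3 ≤ Fintype.card K) (hv01 : ∀ i t, v i t ≤ 1)
    (hclutter : ∀ i j, i ≠ j → ¬ ∀ t, v i t ≤ v j t) {g : Fin (s - 1) → MvPolynomial (Fin s) K}
    (hg : ∀ k, ∃ e, (g k).IsHomogeneous e) (hI : toricIdeal K v = Ideal.span (Set.range g))
    (i₀ : Fin s) :
    toricIdeal K v = Ideal.span (Set.range (powBinomial K (Fintype.card K - 1) i₀)) := by
  have hvan (k : Fin (s - 1)) (x : Fin n → K) (hx : ∀ t, x t ≠ 0) :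
      eval (fun j => ∏ t, x t ^ v j t) (g k) = 0 :=
    eval_eq_zero_of_mem_toricIdeal (hI ▸ Ideal.subset_span (Set.mem_range_self k)) hx
  rw [hI]
  refine span_range_eq_span_powBinomial (by omega) (by simp) hg (fun k i b hb => ?_)
    fun i => hI ▸ powBinomial_mem_toricIdeal i₀ i
  obtain ⟨e, he⟩ := hg k
  exact coeff_single_eq_zero_of_clutter hv01 hclutter he (hvan k) i hb

lemma toricSet_eq_projTorus_of_toricIdeal_eq {i₀ : Fin s}
    (hI : toricIdeal K v = Ideal.span (Set.range (powBinomial K (Fintype.card K - 1) i₀))) :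
    toricSet K hs v = projTorus K (Fin s) := by
  refine toricSet_subset_projTorus.antisymm fun p hp => ?_
  by_contra hpX
  obtain ⟨F, hF, hFp, hFne⟩ := exists_isSeparator_projTorus i₀ hp
  have hFI : F ∈ toricIdeal K v := mem_toricIdeal_of_forall_mem_toricSet hF fun p' hp' =>
    hFne p' (toricSet_subset_projTorus hp') (ne_of_mem_of_not_mem hp' hpX)
  have hle : toricIdeal K v ≤ RingHom.ker (eval p.rep) := by
    rw [hI, Ideal.span_le, Set.range_subset_iff]
    exact fun i => eval_powBinomial_card_sub_one i₀ i hp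
  exact hFp (hle hFI)

end ToricSet

/-- For the algebraic toric set `X` parameterized by the characteristic vectors of the
edges of a clutter: `H_X(d) = |X|` for all `d ≥ (q-2)(s-1)` (the index of regularity
of `S/I(X)` is at most `(q-2)(s-1)`), and if `I(X)` is a complete intersection and
`q ≥ 3`, `s ≥ 2`, then `H_X(d) < |X|` for all `d < (q-2)(s-1)` (the index of
regularity equals `(q-2)(s-1)`). -/
theorem stmt_17 (K : Type) [Field K] [Fintype K] (q n s : ℕ)
    (hK : Fintype.card K = q) (hs : 1 ≤ s)
    (v : Fin s → Fin n → ℕ) (hv01 : ∀ i t, v i t ≤ 1)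
    (hinj : Function.Injective v)
    (hclutter : ∀ i j : Fin s, i ≠ j → ¬ ∀ t, v i t ≤ v j t) :
    (∀ d : ℕ, (q - 2) * (s - 1) ≤ d →
      hilbFn K (toricSet K hs v) (⟨0, hs⟩ : Fin s) d = Set.ncard (toricSet K hs v)) ∧
    ((∃ g : Fin (s - 1) → MvPolynomial (Fin s) K,
        (∀ i, ∃ e, (g i).IsHomogeneous e) ∧
        Ideal.span {f : MvPolynomial (Fin s) K |
          (∃ e, f.IsHomogeneous e) ∧
          ∀ x : Fin n → K, (∀ t, x t ≠ 0) →
            eval (fun j : Fin s => ∏ t, x t ^ v j t) f = 0} =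
          Ideal.span (Set.range g)) →
      3 ≤ q → 2 ≤ s →
      ∀ d : ℕ, d < (q - 2) * (s - 1) →
        hilbFn K (toricSet K hs v) (⟨0, hs⟩ : Fin s) d < Set.ncard (toricSet K hs v)) := by
  subst hK
  constructor
  · intro d hd
    exact hilbFn_eq_ncard_of_subset_projTorus toricSet_subset_projTorus _ (by simpa using hd)
  · rintro ⟨g, hg, hI⟩ hq - d hd
    have hideal := toricIdeal_eq_span_powBinomial hq hv01 hclutter hg hI ⟨0, hs⟩
    rw [toricSet_eq_projTorus_of_toricIdeal_eq hideal]
    exact hilbFn_projTorus_lt_ncard _ (by simpa using hd)
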